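/- Let θ > 0, κ ∈ ℝ, and let u : [0,θ] → (0,∞) be σ_κ-concave. Then u satisfies u'' + κu ≤ 0 in the distributional sense on (0,θ): for every smooth nonnegative function φ with compact support contained in (0,θ), ∫₀^θ u(r)·(φ''(r) + κ·φ(r)) dr ≤ 0. -/

import Mathlib

open Real Set Filter MeasureTheory Topology

/-- Generalized sine: the solution of `v'' + κ v = 0`, `v 0 = 0`, `v' 0 = 1`. -/
noncomputable def sinK (κ r : ℝ) : ℝ :=
  if 0 < κ then Real.sin (Real.sqrt κ * r) / Real.sqrt κ
  else if κ = 0 then r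
  else Real.sinh (Real.sqrt (-κ) * r) / Real.sqrt (-κ)

/-- Generalized cosine: the solution of `v'' + κ v = 0`, `v 0 = 1`, `v' 0 = 0`. -/
noncomputable def cosK (κ r : ℝ) : ℝ :=
  if 0 < κ then Real.cos (Real.sqrt κ * r)
  else if κ = 0 then 1
  else Real.cosh (Real.sqrt (-κ) * r)

/-- Distortion coefficient `σ_κ^{(t)}(θ)` (for `θ < π_κ`; `σ_κ^{(t)}(0) = t`). -/
noncomputable def sigmaCoeff (κ t θ : ℝ) : ℝ :=
  if θ = 0 then t else sinK κ (t * θ) / sinK κ θ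

/-- `u` is `σ_κ`-concave on `I ⊆ ℝ`.  The requirement `θ := |r₁ - r₀| < π_κ`
(encoded by `κ ≤ 0 ∨ |r₁ - r₀| < π/√κ`) expresses that the inequality with the
value `σ_κ^{(t)}(θ) = ∞` for `θ ≥ π_κ` cannot hold for a positive function. -/
def IsSigmaConcaveOn (κ : ℝ) (I : Set ℝ) (u : ℝ → ℝ) : Prop :=
  ∀ r₀ ∈ I, ∀ r₁ ∈ I,
    (r₀ ≠ r₁ → (κ ≤ 0 ∨ |r₁ - r₀| < Real.pi / Real.sqrt κ)) ∧
    ∀ t ∈ Set.Icc (0:ℝ) 1,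
      sigmaCoeff κ (1 - t) |r₁ - r₀| * u r₀ + sigmaCoeff κ t |r₁ - r₀| * u r₁
        ≤ u ((1 - t) * r₀ + t * r₁)

/-- Right derivative `d⁺u(r) = L`, i.e. `(u (r+h) - u r)/h → L` as `h ↓ 0`. -/
def HasRightDerivAt (u : ℝ → ℝ) (r L : ℝ) : Prop :=
  Filter.Tendsto (fun h : ℝ => (u (r + h) - u r) / h) (nhdsWithin 0 (Set.Ioi 0)) (nhds L)

/-- Left derivative `d⁻u(r) = L`, i.e. `(u (r-h) - u r)/(-h) → L` as `h ↓ 0`. -/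
def HasLeftDerivAt (u : ℝ → ℝ) (r L : ℝ) : Prop :=
  Filter.Tendsto (fun h : ℝ => (u (r - h) - u r) / (-h)) (nhdsWithin 0 (Set.Ioi 0)) (nhds L)

/-- The Jacobian function `J_{H,K,N}(r) = (cos_{K/(N-1)}(r) + H/(N-1) sin_{K/(N-1)}(r))₊^{N-1}`. -/
noncomputable def Jac (H K N r : ℝ) : ℝ :=
  (max (cosK (K/(N-1)) r + (H/(N-1)) * sinK (K/(N-1)) r) 0) ^ (N-1)


lemma sk_hasDerivAt_sinK (κ r : ℝ) : HasDerivAt (sinK κ) (cosK κ r) r := by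
  unfold sinK cosK
  by_cases h : 0 < κ
  · simp only [h, if_true]
    have hs : Real.sqrt κ ≠ 0 := (Real.sqrt_pos.2 h).ne'
    have := ((hasDerivAt_id r).const_mul (Real.sqrt κ)).sin.div_const (Real.sqrt κ)
    refine this.congr_deriv ?_
    dsimp only [id]
    field_simp
  · simp only [h, if_false]
    by_cases h0 : κ = 0
    · simp only [h0, if_true]
      exact hasDerivAt_id r
    · simp only [h0, if_false]
      have hk : 0 < -κ := by
        rcases lt_trichotomy κ 0 with h1 | h1 | h1
        · linarith
        · exact absurd h1 h0
        · exact absurd h1 h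
      have hs : Real.sqrt (-κ) ≠ 0 := (Real.sqrt_pos.2 hk).ne'
      have := ((hasDerivAt_id r).const_mul (Real.sqrt (-κ))).sinh.div_const (Real.sqrt (-κ))
      refine this.congr_deriv ?_
      dsimp only [id]
      field_simp

lemma sk_hasDerivAt_cosK (κ r : ℝ) : HasDerivAt (cosK κ) (-κ * sinK κ r) r := by
  unfold sinK cosK
  by_cases h : 0 < κ
  · simp only [h, if_true]
    have hs : Real.sqrt κ ≠ 0 := (Real.sqrt_pos.2 h).ne'
    have h2 : Real.sqrt κ ^ 2 = κ := Real.sq_sqrt h.le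
    have := ((hasDerivAt_id r).const_mul (Real.sqrt κ)).cos
    refine this.congr_deriv ?_
    dsimp only [id]
    field_simp
    rw [h2]
    ring
  · simp only [h, if_false]
    by_cases h0 : κ = 0
    · simp only [h0, if_true]
      simpa using hasDerivAt_const r (1:ℝ)
    · simp only [h0, if_false]
      have hk : 0 < -κ := by
        rcases lt_trichotomy κ 0 with h1 | h1 | h1
        · linarith
        · exact absurd h1 h0
        · exact absurd h1 h
      have hs : Real.sqrt (-κ) ≠ 0 := (Real.sqrt_pos.2 hk).ne'
      have h2 : Real.sqrt (-κ) ^ 2 = -κ := Real.sq_sqrt hk.le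
      have := ((hasDerivAt_id r).const_mul (Real.sqrt (-κ))).cosh
      refine this.congr_deriv ?_
      dsimp only [id]
      field_simp
      rw [h2]
      try ring

lemma sk_sinK_zero (κ : ℝ) : sinK κ 0 = 0 := by simp [sinK]
lemma sk_cosK_zero (κ : ℝ) : cosK κ 0 = 1 := by simp [cosK]
lemma sk_cosK_neg (κ r : ℝ) : cosK κ (-r) = cosK κ r := by simp [cosK]
lemma sk_sinK_two (κ r : ℝ) : sinK κ (2 * r) = 2 * sinK κ r * cosK κ r := by
  unfold sinK cosK
  split_ifs
  · rw [show Real.sqrt κ * (2 * r) = 2 * (Real.sqrt κ * r) by ring, Real.sin_two_mul]; ring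
  · ring
  · rw [show Real.sqrt (-κ) * (2 * r) = 2 * (Real.sqrt (-κ) * r) by ring, Real.sinh_two_mul]; ring

lemma sk_sinK_pos {κ θ : ℝ} (h : κ ≤ 0 ∨ θ < Real.pi / Real.sqrt κ) {x : ℝ} (hx : 0 < x)
    (hxθ : x ≤ θ) : 0 < sinK κ x := by
  unfold sinK
  split_ifs with h1 h2
  · have hs := Real.sqrt_pos.2 h1
    have h3 : θ < Real.pi / Real.sqrt κ := h.resolve_left (not_le.2 h1)
    rw [lt_div_iff₀ hs] at h3
    refine div_pos (Real.sin_pos_of_pos_of_lt_pi (by positivity) ?_) hs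
    nlinarith
  · exact hx
  · have hs : 0 < Real.sqrt (-κ) := by
      apply Real.sqrt_pos.2
      rcases lt_trichotomy κ 0 with h4 | h4 | h4
      · linarith
      · exact absurd h4 h2
      · exact absurd h4 h1
    exact div_pos (Real.sinh_pos_iff.2 (by positivity)) hs

/-- second difference quotients -/
lemma sk_second_diff {f f' : ℝ → ℝ} {r c : ℝ} (hf : ∀ x, HasDerivAt f (f' x) x)
    (hf' : HasDerivAt f' c r) :
    Tendsto (fun h : ℝ => (f (r + h) + f (r - h) - 2 * f r) / h ^ 2) (𝓝[>] 0) (𝓝 c) := by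
  have hc : Continuous f := continuous_iff_continuousAt.2 fun x => (hf x).continuousAt
  have hg : ∀ h : ℝ, HasDerivAt (fun h : ℝ => f (r + h) + f (r - h) - 2 * f r)
      (f' (r + h) - f' (r - h)) h := by
    intro h
    have h1 := (hf (r + h)).comp_const_add r h
    have h2 := (hf (r - h)).comp_const_sub r h
    have := (h1.add h2).sub_const (2 * f r)
    exact this.congr_deriv (by ring)
  have hsq : ∀ h : ℝ, HasDerivAt (fun h : ℝ => h ^ 2) (2 * h) h := by
    intro h
    simpa using hasDerivAt_pow 2 h
  refine HasDerivAt.lhopital_zero_nhdsGT (f' := fun h => f' (r + h) - f' (r - h))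
    (g' := fun h => 2 * h) (Eventually.of_forall hg) (Eventually.of_forall hsq) ?_ ?_ ?_ ?_
  · filter_upwards [self_mem_nhdsWithin] with h hh
    have : (0:ℝ) < h := hh
    positivity
  · have : Continuous (fun h : ℝ => f (r + h) + f (r - h) - 2 * f r) := by fun_prop
    have h2 := (this.tendsto 0).mono_left (nhdsWithin_le_nhds (s := Ioi 0))
    convert h2 using 2
    simp; ring
  · have : Continuous (fun h : ℝ => h ^ 2) := by fun_prop
    have h2 := (this.tendsto 0).mono_left (nhdsWithin_le_nhds (s := Ioi 0))
    convert h2 using 2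
    simp
  · have hd : HasDerivAt (fun h : ℝ => f' (r + h) - f' (r - h)) (c - (-c)) 0 := by
      have h1 : HasDerivAt (fun h : ℝ => f' (r + h)) c 0 :=
        HasDerivAt.comp_const_add r 0 (by simpa using hf')
      have h2 : HasDerivAt (fun h : ℝ => f' (r - h)) (-c) 0 :=
        HasDerivAt.comp_const_sub r 0 (by simpa using hf')
      exact h1.sub h2
    have h3 := hd.tendsto_slope_zero_right.const_mul (1/2)
    refine (h3.congr fun h => ?_).trans (by rw [show (1/2:ℝ) * (c - -c) = c by ring])
    simp only [zero_add, add_zero, sub_zero, sub_self, smul_eq_mul]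
    by_cases hh : h = 0
    · simp [hh]
    · field_simp

/-- uniform bound -/
lemma sk_second_diff_bound {f f' f'' : ℝ → ℝ} {M : ℝ} (hf : ∀ x, HasDerivAt f (f' x) x)
    (hf' : ∀ x, HasDerivAt f' (f'' x) x) (hM : ∀ x, |f'' x| ≤ M) (r h : ℝ) (hh : 0 < h) :
    |f (r + h) + f (r - h) - 2 * f r| ≤ 2 * M * h ^ 2 := by
  have hM0 : 0 ≤ M := (abs_nonneg _).trans (hM 0)
  have hg : ∀ s : ℝ, HasDerivAt (fun h : ℝ => f (r + h) + f (r - h) - 2 * f r)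
      (f' (r + s) - f' (r - s)) s := by
    intro h
    have h1 := (hf (r + h)).comp_const_add r h
    have h2 := (hf (r - h)).comp_const_sub r h
    have := (h1.add h2).sub_const (2 * f r)
    exact this.congr_deriv (by ring)
  have hl : ∀ x y, |f' y - f' x| ≤ M * |y - x| := fun x y => by
    have := Convex.norm_image_sub_le_of_norm_hasDerivWithin_le (f := f') (f' := f'') (s := univ)
      (fun x _ => (hf' x).hasDerivWithinAt) (fun x _ => hM x) convex_univ (mem_univ x) (mem_univ y)
    simpa using this
  have := Convex.norm_image_sub_le_of_norm_hasDerivWithin_le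
    (f := fun h : ℝ => f (r + h) + f (r - h) - 2 * f r)
    (f' := fun s => f' (r + s) - f' (r - s)) (s := Icc 0 h) (C := 2 * M * h)
    (fun x _ => (hg x).hasDerivWithinAt) (fun x hx => by
      rw [Real.norm_eq_abs]
      refine (hl _ _).trans ?_
      rw [show r + x - (r - x) = 2 * x by ring, abs_of_nonneg (by linarith [hx.1])]
      nlinarith [hx.2]) (convex_Icc 0 h) (left_mem_Icc.2 hh.le) (right_mem_Icc.2 hh.le)
  simp only [Real.norm_eq_abs, add_zero, sub_zero, abs_of_pos hh] at this
  rw [show f r + f r - 2 * f r = 0 by ring, sub_zero] at this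
  linarith [this, show 2 * M * h * h = 2 * M * h ^ 2 by ring]

/-- three point inequality -/
lemma sk_three {θ κ : ℝ} {u : ℝ → ℝ} (hconc : IsSigmaConcaveOn κ (Set.Icc 0 θ) u)
    (hS : ∀ x, 0 < x → x ≤ θ → 0 < sinK κ x) {x y z : ℝ} (hx : 0 ≤ x) (hxy : x ≤ y)
    (hyz : y ≤ z) (hxz : x < z) (hz : z ≤ θ) :
    sinK κ (z - y) * u x + sinK κ (y - x) * u z ≤ sinK κ (z - x) * u y := by
  have hd : 0 < z - x := sub_pos.2 hxz
  have h := (hconc x ⟨hx, by linarith⟩ z ⟨by linarith, hz⟩).2 ((y - x) / (z - x))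
    ⟨by apply div_nonneg <;> linarith, by rw [div_le_one hd]; linarith⟩
  have hp := hS (z - x) hd (by linarith)
  rw [abs_of_pos hd] at h
  have e1 : (1 - (y - x) / (z - x)) * (z - x) = z - y := by field_simp; ring
  have e2 : ((y - x) / (z - x)) * (z - x) = y - x := by field_simp
  have e3 : (1 - (y - x) / (z - x)) * x + (y - x) / (z - x) * z = y := by field_simp; ring
  simp only [sigmaCoeff, hd.ne', if_false, e1, e2, e3] at h
  have h2 := mul_le_mul_of_nonneg_left h hp.le
  refine le_trans (le_of_eq ?_) h2
  field_simp

lemma sk_cont {θ κ : ℝ} {u : ℝ → ℝ} (hconc : IsSigmaConcaveOn κ (Set.Icc 0 θ) u)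
    (hS : ∀ x, 0 < x → x ≤ θ → 0 < sinK κ x) {y : ℝ} (hy : y ∈ Ioo 0 θ) :
    ContinuousAt u y := by
  have hc : Continuous (sinK κ) :=
    continuous_iff_continuousAt.2 fun x => (sk_hasDerivAt_sinK κ x).continuousAt
  obtain ⟨h0, h1⟩ := hy
  have p1 := hS y h0 h1.le
  have p2 := hS (θ - y) (by linarith) (by linarith)
  rw [continuousAt_iff_continuous_left'_right']
  constructor
  · -- left
    have L : Tendsto (fun x => (sinK κ (y - x) * u 0 + sinK κ x * u y) / sinK κ y)
        (𝓝[<] y) (𝓝 (u y)) := by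
      have : Continuous (fun x => (sinK κ (y - x) * u 0 + sinK κ x * u y) / sinK κ y) := by
        fun_prop
      have h2 := (this.tendsto y).mono_left (nhdsWithin_le_nhds (s := Iio y))
      convert h2 using 2
      simp [sk_sinK_zero]
      field_simp
    have R : Tendsto (fun x => (sinK κ (θ - x) * u y - sinK κ (y - x) * u θ) / sinK κ (θ - y))
        (𝓝[<] y) (𝓝 (u y)) := by
      have : Continuous
          (fun x => (sinK κ (θ - x) * u y - sinK κ (y - x) * u θ) / sinK κ (θ - y)) := by
        fun_prop
      have h2 := (this.tendsto y).mono_left (nhdsWithin_le_nhds (s := Iio y))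
      convert h2 using 2
      simp [sk_sinK_zero]
      field_simp
    refine tendsto_of_tendsto_of_tendsto_of_le_of_le' L R ?_ ?_
    · filter_upwards [Ioo_mem_nhdsLT h0] with x hx
      have := sk_three hconc hS (x := 0) (y := x) (z := y) le_rfl hx.1.le hx.2.le h0 h1.le
      rw [div_le_iff₀ p1]
      simp only [sub_zero] at this
      linarith
    · filter_upwards [Ioo_mem_nhdsLT h0] with x hx
      have := sk_three hconc hS (x := x) (y := y) (z := θ) hx.1.le hx.2.le h1.le
        (hx.2.trans h1) le_rfl
      rw [le_div_iff₀ p2]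
      linarith
  · have L : Tendsto (fun x => (sinK κ (θ - x) * u y + sinK κ (x - y) * u θ) / sinK κ (θ - y))
        (𝓝[>] y) (𝓝 (u y)) := by
      have : Continuous
          (fun x => (sinK κ (θ - x) * u y + sinK κ (x - y) * u θ) / sinK κ (θ - y)) := by
        fun_prop
      have h2 := (this.tendsto y).mono_left (nhdsWithin_le_nhds (s := Ioi y))
      convert h2 using 2
      simp [sk_sinK_zero]
      field_simp
    have R : Tendsto (fun x => (sinK κ x * u y - sinK κ (x - y) * u 0) / sinK κ y)
        (𝓝[>] y) (𝓝 (u y)) := by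
      have : Continuous (fun x => (sinK κ x * u y - sinK κ (x - y) * u 0) / sinK κ y) := by
        fun_prop
      have h2 := (this.tendsto y).mono_left (nhdsWithin_le_nhds (s := Ioi y))
      convert h2 using 2
      simp [sk_sinK_zero]
      field_simp
    refine tendsto_of_tendsto_of_tendsto_of_le_of_le' L R ?_ ?_
    · filter_upwards [Ioo_mem_nhdsGT h1] with x hx
      have := sk_three hconc hS (x := y) (y := x) (z := θ) h0.le hx.1.le hx.2.le h1 le_rfl
      rw [div_le_iff₀ p2]
      linarith
    · filter_upwards [Ioo_mem_nhdsGT h1] with x hx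
      have := sk_three hconc hS (x := 0) (y := y) (z := x) le_rfl h0.le hx.1.le
        (h0.trans hx.1) hx.2.le
      rw [le_div_iff₀ p1]
      simp only [sub_zero] at this
      linarith

lemma sk_support {θ : ℝ} (hθ : 0 < θ) {K : Set ℝ} (hK : IsCompact K) (h : K ⊆ Ioo 0 θ) :
    ∃ δ > 0, 2 * δ < θ ∧ K ⊆ Icc (2 * δ) (θ - 2 * δ) := by
  rcases K.eq_empty_or_nonempty with rfl | hne
  · exact ⟨θ / 4, by positivity, by linarith, empty_subset _⟩
  · obtain ⟨a, ha, ha'⟩ := hK.exists_isLeast hne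
    obtain ⟨b, hb, hb'⟩ := hK.exists_isGreatest hne
    have h1 := h ha
    have h2 := h hb
    have h3 := ha' hb
    refine ⟨min (a / 2) ((θ - b) / 2), lt_min (by linarith [h1.1]) (by linarith [h2.2]), ?_, ?_⟩
    · have := min_le_left (a / 2) ((θ - b) / 2)
      linarith [h2.2]
    · intro x hx
      have := min_le_left (a / 2) ((θ - b) / 2)
      have := min_le_right (a / 2) ((θ - b) / 2)
      exact ⟨by linarith [ha' hx], by linarith [hb' hx]⟩

/-- a positive `σ_κ`-concave function on `[0,θ]` satisfies
`u'' + κ u ≤ 0` in the distributional sense on `(0,θ)`: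
`∫₀^θ u (φ'' + κ φ) ≤ 0` for every smooth nonnegative `φ` compactly supported in `(0,θ)`. -/
theorem sigmaConcave_distributional_ineq (θ κ : ℝ) (hθ : 0 < θ) (u : ℝ → ℝ)
    (hpos : ∀ r ∈ Set.Icc 0 θ, 0 < u r)
    (hconc : IsSigmaConcaveOn κ (Set.Icc 0 θ) u)
    (φ : ℝ → ℝ) (hφ : ContDiff ℝ (⊤ : ℕ∞) φ) (hφ0 : ∀ x, 0 ≤ φ x)
    (hφsupp : tsupport φ ⊆ Set.Ioo 0 θ) (hφc : HasCompactSupport φ) :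
    ∫ r in (0:ℝ)..θ, u r * (deriv (deriv φ) r + κ * φ r) ≤ 0 := by
  have hS : ∀ x, 0 < x → x ≤ θ → 0 < sinK κ x := by
    have h := (hconc 0 ⟨le_rfl, hθ.le⟩ θ ⟨hθ.le, le_rfl⟩).1 hθ.ne
    rw [sub_zero, abs_of_pos hθ] at h
    exact fun x hx hxθ => sk_sinK_pos h hx hxθ
  obtain ⟨δ, hδ, hδθ, hK⟩ := sk_support hθ hφc hφsupp
  have hd1 : ∀ x, HasDerivAt φ (deriv φ x) x := fun x =>
    ((hφ.differentiable (by simp)) x).hasDerivAt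
  have hφ' : ContDiff ℝ (⊤ : ℕ∞) (deriv φ) := (contDiff_infty_iff_deriv.1 hφ).2
  have hd2 : ∀ x, HasDerivAt (deriv φ) (deriv (deriv φ) x) x := fun x =>
    ((hφ'.differentiable (by simp)) x).hasDerivAt
  have hφ'' : Continuous (deriv (deriv φ)) := ((contDiff_infty_iff_deriv.1 hφ').2).continuous
  have hcφ : Continuous φ := hφ.continuous
  obtain ⟨M, hM⟩ := hφc.deriv.deriv.exists_bound_of_continuous hφ''
  obtain ⟨B, hB⟩ := hφc.exists_bound_of_continuous hcφ
  have hz : ∀ r, r ∉ Icc (2 * δ) (θ - 2 * δ) → φ r = 0 := fun r hr =>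
    image_eq_zero_of_notMem_tsupport fun h => hr (hK h)
  have hz'' : ∀ r, r ∉ Icc (2 * δ) (θ - 2 * δ) → deriv (deriv φ) r = 0 := fun r hr =>
    image_eq_zero_of_notMem_tsupport fun h => hr (hK (tsupport_deriv_subset
      (tsupport_deriv_subset h)))
  set U : ℝ → ℝ := indicator (Icc δ (θ - δ)) u with hU
  have hUint : Integrable U := by
    rw [hU, integrable_indicator_iff measurableSet_Icc]
    refine ContinuousOn.integrableOn_Icc fun x hx => ?_
    exact (sk_cont hconc hS ⟨by linarith [hx.1], by linarith [hx.2]⟩).continuousWithinAt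
  have hUeq : ∀ r ∈ Icc δ (θ - δ), U r = u r := fun r hr => indicator_of_mem hr u
  -- rewrite the integral
  have hI : ∫ r in (0:ℝ)..θ, u r * (deriv (deriv φ) r + κ * φ r)
      = ∫ r, U r * (deriv (deriv φ) r + κ * φ r) := by
    rw [intervalIntegral.integral_of_le hθ.le, ← integral_indicator measurableSet_Ioc]
    congr 1
    ext r
    by_cases hr : r ∈ Icc (2 * δ) (θ - 2 * δ)
    · rw [indicator_of_mem (show r ∈ Ioc 0 θ from ⟨by linarith [hr.1], by linarith [hr.2]⟩),
        hUeq r ⟨by linarith [hr.1], by linarith [hr.2]⟩]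
    · simp [indicator, hz r hr, hz'' r hr]
  rw [hI]
  have hcos : Tendsto (fun h : ℝ => (2 - 2 * cosK κ h) / h ^ 2) (𝓝[>] 0) (𝓝 κ) := by
    have h1 : HasDerivAt (fun x => -κ * sinK κ x) (-κ * cosK κ 0) 0 :=
      (sk_hasDerivAt_sinK κ 0).const_mul _
    have h2 := (sk_second_diff (sk_hasDerivAt_cosK κ) h1).neg
    rw [sk_cosK_zero, show -(-κ * 1) = κ by ring] at h2
    refine h2.congr fun h => ?_
    rw [zero_add, zero_sub, sk_cosK_neg]
    ring
  have hlim : Tendsto (fun h : ℝ => ∫ r, U r * ((φ (r + h) + φ (r - h) - 2 * φ r) / h ^ 2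
      + (2 - 2 * cosK κ h) / h ^ 2 * φ r)) (𝓝[>] 0)
      (𝓝 (∫ r, U r * (deriv (deriv φ) r + κ * φ r))) := by
    refine tendsto_integral_filter_of_dominated_convergence
      (fun r => |U r| * (2 * M + (|κ| + 1) * B)) ?_ ?_ ?_ ?_
    · refine Eventually.of_forall fun h => hUint.aestronglyMeasurable.mul ?_
      have : Continuous (fun r => (φ (r + h) + φ (r - h) - 2 * φ r) / h ^ 2
        + (2 - 2 * cosK κ h) / h ^ 2 * φ r) := by fun_prop
      exact this.aestronglyMeasurable
    · have hb := hcos.abs.eventually (gt_mem_nhds (show |κ| < |κ| + 1 by linarith))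
      filter_upwards [self_mem_nhdsWithin, hb] with h hh hb
      have hh : 0 < h := hh
      refine Eventually.of_forall fun r => ?_
      rw [Real.norm_eq_abs, abs_mul]
      refine mul_le_mul_of_nonneg_left ((abs_add_le _ _).trans (add_le_add ?_ ?_)) (abs_nonneg _)
      · rw [abs_div, abs_of_pos (show 0 < h ^ 2 by positivity), div_le_iff₀ (by positivity)]
        exact sk_second_diff_bound hd1 hd2 hM r h hh
      · rw [abs_mul]
        exact mul_le_mul hb.le (hB r) (abs_nonneg _) (by positivity)
    · exact hUint.abs.mul_const _
    · refine Eventually.of_forall fun r => Tendsto.const_mul _ ?_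
      exact (sk_second_diff hd1 (hd2 r)).add (hcos.mul_const _)
  refine le_of_tendsto hlim ?_
  filter_upwards [Ioo_mem_nhdsGT hδ] with h hh
  obtain ⟨hh0, hhδ⟩ := hh
  have hi : ∀ c, Integrable fun r => U r * φ (r + c) := fun c => by
    refine hUint.mul_bdd (c := B) ?_ (Eventually.of_forall fun r => hB _)
    exact (hcφ.comp (continuous_id.add continuous_const)).aestronglyMeasurable
  have hi' : ∀ c, Integrable fun r => U (r + c) * φ r := fun c => by
    refine (hUint.comp_add_right c).mul_bdd (c := B) ?_ (Eventually.of_forall fun r => hB _)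
    exact hcφ.aestronglyMeasurable
  have hs : ∀ c, ∫ r, U r * φ (r + c) = ∫ r, U (r + -c) * φ r := fun c => by
    rw [← integral_add_right_eq_self (fun r => U (r + -c) * φ r) c]
    simp
  have hi0 : Integrable fun r => U r * φ r := by simpa using hi 0
  have e : ∫ r, U r * ((φ (r + h) + φ (r - h) - 2 * φ r) / h ^ 2
      + (2 - 2 * cosK κ h) / h ^ 2 * φ r)
      = (h ^ 2)⁻¹ * ∫ r, (U (r + -h) * φ r + U (r + h) * φ r - 2 * cosK κ h * (U r * φ r)) := by
    have e1 : ∫ r, (U (r + -h) * φ r + U (r + h) * φ r - 2 * cosK κ h * (U r * φ r))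
        = ∫ r, (U r * φ (r + h) + U r * φ (r + -h) - 2 * cosK κ h * (U r * φ r)) := by
      have a1 : Integrable fun r => U (r + -h) * φ r + U (r + h) * φ r := (hi' _).add (hi' _)
      have a2 : Integrable fun r => U r * φ (r + h) + U r * φ (r + -h) := (hi _).add (hi _)
      rw [integral_sub a1 (hi0.const_mul _), integral_add (hi' _) (hi' _),
        integral_sub a2 (hi0.const_mul _), integral_add (hi _) (hi _),
        hs h, hs (-h), neg_neg]
    rw [e1, ← integral_const_mul]
    congr 1
    ext r
    rw [← sub_eq_add_neg]
    ring
  rw [e]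
  refine mul_nonpos_of_nonneg_of_nonpos (by positivity) (integral_nonpos fun r => ?_)
  simp only [Pi.zero_apply]
  by_cases hr : r ∈ Icc (2 * δ) (θ - 2 * δ)
  · obtain ⟨ha, hb⟩ := hr
    rw [hUeq r ⟨by linarith, by linarith⟩, hUeq (r + -h) ⟨by linarith, by linarith⟩,
      hUeq (r + h) ⟨by linarith, by linarith⟩]
    have h3 := sk_three hconc hS (x := r + -h) (y := r) (z := r + h) (by linarith) (by linarith)
      (by linarith) (by linarith) (by linarith)
    rw [show r + h - r = h by ring, show r - (r + -h) = h by ring,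
      show r + h - (r + -h) = 2 * h by ring, sk_sinK_two] at h3
    have hp := hS h hh0 (by linarith)
    have h4 : u (r + -h) + u (r + h) - 2 * cosK κ h * u r ≤ 0 := by
      by_contra hcon
      have := mul_pos hp (not_le.1 hcon)
      linarith
    have := mul_nonpos_of_nonpos_of_nonneg h4 (hφ0 r)
    linarith
  · simp [hz r hr]
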